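/- arXiv:2401.09371 — 5 statements merged into one kernel-verified Lean document; each statement's English description precedes it below -/
import Mathlib

section
/- For every finitely supported sequence r : ℤ → ℂ, every half-bandwidth parameter W ∈ (0, 1/2], and all l, m ∈ ℕ, the tail energy of the half-sample shifted sequence is bounded by the tail energy of the band-limited upsampled sequence over the doubled index range: Ē_{−l,m}(B_W^{1/2} r) ≤ Ē_{−2l,2m}(B_{W/2}(r↑2)). -/
open scoped BigOperators

/-- normalized sinc: sinc(x) = sin(πx)/(πx) for x ≠ 0, sinc(0) = 1. -/
noncomputable def sinc (x : ℝ) : ℝ :=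
  if x = 0 then 1 else Real.sin (Real.pi * x) / (Real.pi * x)

/-- Fractional shift / band-limiting operator `B_W^τ` acting on a sequence. -/
noncomputable def fracShift (W τ : ℝ) (r : ℤ → ℂ) (n : ℤ) : ℂ :=
  ∑' q : ℤ, r q * (sinc (2 * W * ((n : ℝ) - τ - (q : ℝ))) : ℂ)

/-- 2-fold upsampling of a sequence. -/
noncomputable def upsample2 (r : ℤ → ℂ) (n : ℤ) : ℂ :=
  if Even n then r (n / 2) else 0

/-- Tail energy `Ē_{-l,m}(r) = Σ_{n ≤ -l-1} |r n|² + Σ_{n ≥ m+1} |r n|²`. -/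
noncomputable def tailEnergy (l m : ℕ) (r : ℤ → ℂ) : ℝ :=
  (∑' k : ℕ, ‖r (-(l : ℤ) - 1 - (k : ℤ))‖ ^ 2) + ∑' k : ℕ, ‖r ((m : ℤ) + 1 + (k : ℤ))‖ ^ 2

theorem sinc_mul_le (x : ℝ) : |sinc x| * |x| ≤ 1 := by
  unfold sinc
  split_ifs with h
  · simp [h]
  · have hx : 0 < |x| := abs_pos.mpr h
    have hp := Real.pi_gt_three
    rw [abs_div, abs_mul, abs_of_pos Real.pi_pos]
    have h1 := Real.abs_sin_le_one (Real.pi * x)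
    have : |Real.sin (Real.pi * x)| / (Real.pi * |x|) * |x| = |Real.sin (Real.pi * x)| / Real.pi := by
      field_simp
    rw [this, div_le_one Real.pi_pos]
    linarith

theorem sinc_isBigO (b c : ℝ) (hc : c ≠ 0) :
    (fun k : ℕ => sinc (b + c * k)) =O[Filter.atTop] fun k : ℕ => (1 : ℝ) / k := by
  have hc' : 0 < |c| := abs_pos.mpr hc
  apply Asymptotics.IsBigO.of_bound (2 / |c|)
  filter_upwards [Filter.eventually_ge_atTop (⌈2 * |b| / |c|⌉₊), Filter.eventually_gt_atTop 0]
    with k hk hk0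
  have hk' : 2 * |b| / |c| ≤ k := (Nat.le_ceil _).trans (by exact_mod_cast hk)
  have hk0' : (0 : ℝ) < k := by exact_mod_cast hk0
  rw [div_le_iff₀ hc'] at hk'
  have h1 := sinc_mul_le (b + c * k)
  have h2 : |c| * k / 2 ≤ |b + c * k| := by
    have := abs_sub_abs_le_abs_sub (c * k) (-b)
    rw [abs_mul, abs_neg, Nat.abs_cast, sub_neg_eq_add, add_comm (c * (k : ℝ))] at this
    linarith
  rw [Real.norm_eq_abs, Real.norm_eq_abs, abs_of_pos (by positivity : (0 : ℝ) < 1 / k)]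
  have h3 : |sinc (b + c * k)| * (|c| * k / 2) ≤ 1 :=
    (mul_le_mul_of_nonneg_left h2 (abs_nonneg _)).trans h1
  have : 2 / |c| * (1 / (k : ℝ)) = 1 / (|c| * k / 2) := by field_simp
  rw [this, le_div_iff₀ (by positivity)]
  exact h3

theorem up_eq (r : ℤ → ℂ) (W : ℝ) (N : ℤ) :
    fracShift (W/2) 0 (upsample2 r) N = ∑' q : ℤ, r q * (sinc (W * ((N : ℝ) - 2 * q)) : ℂ) := by
  unfold fracShift
  have hinj : Function.Injective (fun q : ℤ => 2 * q) := fun a b h => by simpa using h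
  rw [← hinj.tsum_eq]
  · apply tsum_congr
    intro q
    have : upsample2 r (2 * q) = r q := by simp [upsample2]
    rw [this]
    congr 3
    push_cast
    ring
  · intro p hp
    by_contra hn
    apply hp
    have : ¬ Even p := fun ⟨a, ha⟩ => hn ⟨a, by simp only; omega⟩
    simp [upsample2, this]

theorem up_summable (r : ℤ → ℂ) (hr : (Function.support r).Finite)
    (W : ℝ) (hW : 0 < W) (a e : ℤ) (he : e ≠ 0) :
    Summable fun k : ℕ => ‖fracShift (W/2) 0 (upsample2 r) (a + e * k)‖ ^ 2 := by
  have h : (fun k : ℕ => fracShift (W/2) 0 (upsample2 r) (a + e * k))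
      =O[Filter.atTop] fun k : ℕ => (1 : ℝ) / k := by
    have : (fun k : ℕ => fracShift (W/2) 0 (upsample2 r) (a + e * k)) =
        fun k : ℕ => ∑ q ∈ hr.toFinset,
          r q * (sinc (W * (a - 2 * q) + W * e * k) : ℂ) := by
      funext k
      rw [up_eq, tsum_eq_sum (s := hr.toFinset)]
      · apply Finset.sum_congr rfl
        intro q _
        congr 3
        push_cast
        ring
      · intro q hq
        have : r q = 0 := by simpa using hq
        simp [this]
    rw [this]
    apply Asymptotics.IsBigO.fun_sum
    intro q _
    apply Asymptotics.IsBigO.const_mul_left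
    have h := sinc_isBigO (W * (a - 2 * q)) (W * e)
      (mul_ne_zero hW.ne' (by exact_mod_cast he))
    refine Asymptotics.IsBigO.trans (Asymptotics.IsBigO.of_bound 1 ?_) h
    filter_upwards with k
    simp
  have h2 := h.norm_left.pow 2
  refine summable_of_isBigO_nat ?_ h2
  simpa using (Real.summable_one_div_nat_pow (p := 2)).mpr (by norm_num)

theorem half_eq (r : ℤ → ℂ) (W : ℝ) (n : ℤ) :
    fracShift W (1/2) r n = fracShift (W/2) 0 (upsample2 r) (2 * n - 1) := by
  rw [up_eq]
  unfold fracShift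
  apply tsum_congr
  intro q
  congr 3
  push_cast
  ring

theorem sub_tsum_le (f : ℕ → ℝ) (hf : Summable f) (h0 : ∀ k, 0 ≤ f k) (i : ℕ → ℕ)
    (hi : Function.Injective i) : ∑' k, f (i k) ≤ ∑' k, f k :=
  tsum_comp_le_tsum_of_inj hf h0 hi

/-- the tail energy of the half-sample shifted sequence is bounded by the
tail energy of the band-limited upsampled sequence over the doubled index range. -/
theorem tailEnergy_half_shift_le
    (r : ℤ → ℂ) (hr : (Function.support r).Finite)
    (W : ℝ) (hW : W ∈ Set.Ioc (0 : ℝ) (1/2)) (l m : ℕ) :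
    tailEnergy l m (fracShift W (1/2) r)
      ≤ tailEnergy (2*l) (2*m) (fracShift (W/2) 0 (upsample2 r)) := by
  have h1 := up_summable r hr W hW.1 (-((2 * l : ℕ) : ℤ) - 1) (-1) (by norm_num)
  have h2 := up_summable r hr W hW.1 (((2 * m : ℕ) : ℤ) + 1) 1 (by norm_num)
  unfold tailEnergy
  apply add_le_add
  · have := sub_tsum_le _ h1 (fun k => by positivity) (fun k => 2 * k + 2)
      (fun a b h => by simpa using h)
    refine (Eq.le ?_).trans (this.trans (Eq.le ?_))
    · apply tsum_congr
      intro k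
      rw [half_eq]
      congr 3
      push_cast
      ring
    · apply tsum_congr
      intro k
      congr 3
      ring
  · have := sub_tsum_le _ h2 (fun k => by positivity) (fun k => 2 * k)
      (fun a b h => by simpa using h)
    refine (Eq.le ?_).trans (this.trans (Eq.le ?_))
    · apply tsum_congr
      intro k
      rw [half_eq]
      congr 3
      push_cast
      ring
    · apply tsum_congr
      intro k
      congr 3
      ring
end

section
/- Let W ∈ (0,1) and let s : ℤ → ℂ be finitely supported, with discrete-time Fourier transform Ŝ(f) := Σ_{n∈ℤ} s[n]·e^{−2πi f n}. Define the band-limited interpolation b[n] := Σ_{q∈ℤ} s[q]·sinc(W(n−q)) for n ∈ ℤ. Then W²·Σ_{n∈ℤ} |b[n]|² = ∫_{−W/2}^{W/2} |Ŝ(f)|² df. -/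
open scoped BigOperators

lemma aux_exp (W : ℝ) (hW : 0 < W) (m : ℤ) :
    ∫ f in (-(W/2))..(W/2), Complex.exp (-2 * (Real.pi : ℂ) * Complex.I * (f : ℂ) * (m : ℂ))
      = W * (sinc (W * (m : ℝ)) : ℂ) := by
  by_cases hm : m = 0
  · subst hm
    simp [sinc]
  · have hmC : (m : ℂ) ≠ 0 := by exact_mod_cast hm
    have hmR : (m : ℝ) ≠ 0 := by exact_mod_cast hm
    have hpi : (Real.pi : ℂ) ≠ 0 := by exact_mod_cast Real.pi_ne_zero
    have hWC : (W : ℂ) ≠ 0 := by exact_mod_cast hW.ne'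
    have hc : (-2 * (Real.pi : ℂ) * Complex.I * (m : ℂ)) ≠ 0 := by
      simp [hmC, hpi]
    have h1 : ∀ f : ℝ, Complex.exp (-2 * (Real.pi : ℂ) * Complex.I * (f : ℂ) * (m : ℂ))
      = Complex.exp ((-2 * (Real.pi : ℂ) * Complex.I * (m : ℂ)) * f) := by
      intro f; congr 1; ring
    simp_rw [h1]
    rw [integral_exp_mul_complex hc]
    have hne : W * (m : ℝ) ≠ 0 := mul_ne_zero hW.ne' hmR
    rw [sinc, if_neg hne]
    push_cast
    rw [Complex.sin]
    have e1 : (-2 * (Real.pi : ℂ) * Complex.I * (m : ℂ)) * ((W : ℂ) / 2)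
      = -(Real.pi * (W * m)) * Complex.I := by ring
    have e2 : (-2 * (Real.pi : ℂ) * Complex.I * (m : ℂ)) * (-((W : ℂ) / 2))
      = (Real.pi * (W * m)) * Complex.I := by ring
    rw [e1, e2]
    have hI : Complex.I ≠ 0 := Complex.I_ne_zero
    field_simp
    ring_nf
    simp only [Complex.I_sq]
    ring

theorem bandlimited_energy_eq_inband_spectrum
    (W : ℝ) (hW : W ∈ Set.Ioo (0 : ℝ) 1)
    (s : ℤ → ℂ) (hs : (Function.support s).Finite)
    (S : ℝ → ℂ)
    (hS : ∀ f : ℝ, S f = ∑' n : ℤ, s n * Complex.exp (-2 * (Real.pi : ℂ) * Complex.I * (f : ℂ) * (n : ℂ)))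
    (b : ℤ → ℂ)
    (hb : ∀ n : ℤ, b n = ∑' q : ℤ, s q * (sinc (W * ((n : ℝ) - (q : ℝ))) : ℂ)) :
    W ^ 2 * ∑' n : ℤ, ‖b n‖ ^ 2 = ∫ f in (-(W/2))..(W/2), ‖S f‖ ^ 2 := by
  obtain ⟨hW0, hW1⟩ := hW
  have hz : ∀ q ∉ hs.toFinset, s q = 0 := by
    intro q hq; simpa using hq
  have hS' : ∀ f : ℝ, S f = ∑ n ∈ hs.toFinset,
      s n * Complex.exp (-2 * (Real.pi : ℂ) * Complex.I * (f : ℂ) * (n : ℂ)) := by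
    intro f
    rw [hS, tsum_eq_sum]
    intro q hq; rw [hz q hq, zero_mul]
  have hb' : ∀ n : ℤ, b n = ∑ q ∈ hs.toFinset, s q * (sinc (W * ((n : ℝ) - (q : ℝ))) : ℂ) := by
    intro n
    rw [hb, tsum_eq_sum]
    intro q hq; rw [hz q hq, zero_mul]
  have hSc : Continuous S := by
    rw [funext hS']
    fun_prop
  have hab : (-(1/2) : ℝ) < 1/2 := by norm_num
  set g : ℝ → ℂ := (Set.Ioc (-(W/2)) (W/2)).indicator S with hg
  have hsub : Set.Ioc (-(W/2)) (W/2) ⊆ Set.Ioc (-(1/2) : ℝ) (1/2) :=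
    Set.Ioc_subset_Ioc (by linarith) (by linarith)
  have key : ∀ {E : Type} [NormedAddCommGroup E] [NormedSpace ℝ E] (h : ℝ → E),
      ∫ x in (-(1/2) : ℝ)..(1/2), (Set.Ioc (-(W/2)) (W/2)).indicator h x
        = ∫ x in (-(W/2))..(W/2), h x := by
    intro E _ _ h
    rw [intervalIntegral.integral_of_le hab.le, intervalIntegral.integral_of_le (by linarith),
      MeasureTheory.setIntegral_indicator measurableSet_Ioc, Set.inter_eq_right.mpr hsub]
  have hL2 : MeasureTheory.MemLp g 2 (MeasureTheory.volume.restrict (Set.Ioc (-(1/2) : ℝ) (1/2))) := by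
    rw [hg, MeasureTheory.memLp_indicator_iff_restrict measurableSet_Ioc]
    obtain ⟨C, hC⟩ := (isCompact_Icc (a := -(W/2)) (b := W/2)).exists_bound_of_continuousOn
      hSc.continuousOn
    rw [MeasureTheory.Measure.restrict_restrict measurableSet_Ioc, Set.inter_eq_left.mpr hsub]
    refine MeasureTheory.MemLp.of_bound hSc.aestronglyMeasurable C ?_
    filter_upwards [MeasureTheory.ae_restrict_mem measurableSet_Ioc] with x hx
    exact hC x (Set.Ioc_subset_Icc_self hx)
  have hP := tsum_sq_fourierCoeffOn hab hL2
  have hcoef : ∀ n : ℤ, fourierCoeffOn hab g n = W * b (-n) := by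
    intro n
    rw [fourierCoeffOn_eq_integral]
    have e : ∀ x : ℝ, fourier (-n) (x : AddCircle ((1/2 : ℝ) - -(1/2))) • g x
      = (Set.Ioc (-(W/2)) (W/2)).indicator (fun x : ℝ => ∑ q ∈ hs.toFinset, s q *
        Complex.exp (-2 * (Real.pi : ℂ) * Complex.I * (x : ℂ) * ((n + q : ℤ) : ℂ))) x := by
      intro x
      rw [hg]
      by_cases hx : x ∈ Set.Ioc (-(W/2)) (W/2)
      · rw [Set.indicator_of_mem hx, Set.indicator_of_mem hx, hS', fourier_coe_apply,
          smul_eq_mul, Finset.mul_sum]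
        refine Finset.sum_congr rfl fun q _ => ?_
        rw [mul_left_comm, ← Complex.exp_add]
        congr 2
        push_cast
        ring
      · rw [Set.indicator_of_notMem hx, Set.indicator_of_notMem hx, smul_zero]
    simp_rw [e]
    rw [key, intervalIntegral.integral_finsetSum]
    · simp_rw [intervalIntegral.integral_const_mul, aux_exp W hW0]
      rw [hb', Finset.mul_sum]
      norm_num
      refine Finset.sum_congr rfl fun q _ => ?_
      have : sinc (W * ((n:ℝ) + q)) = sinc (W * (-(n:ℝ) - q)) := by
        have : W * (-(n:ℝ) - q) = -(W * ((n:ℝ) + q)) := by ring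
        rw [this]
        simp [sinc]
      rw [this]
      ring
    · intro q _
      apply Continuous.intervalIntegrable
      fun_prop
  simp_rw [hcoef] at hP
  have e2 : ∀ x, ‖g x‖ ^ 2 = (Set.Ioc (-(W/2)) (W/2)).indicator (fun x => ‖S x‖ ^ 2) x := by
    intro x
    by_cases hx : x ∈ Set.Ioc (-(W/2)) (W/2) <;> simp [hg, hx]
  simp_rw [e2] at hP
  rw [key] at hP
  have e3 : ∑' i : ℤ, ‖(W : ℂ) * b (-i)‖ ^ 2 = W ^ 2 * ∑' n : ℤ, ‖b n‖ ^ 2 := by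
    rw [← tsum_mul_left, ← (Equiv.neg ℤ).tsum_eq (fun n => W ^ 2 * ‖b n‖ ^ 2)]
    refine tsum_congr fun i => ?_
    simp [mul_pow]
  rw [← e3, hP]
  norm_num
end

section
/- For every N ∈ ℕ and every W ∈ (0,1), every eigenvalue λ of the real symmetric (2N+1)×(2N+1) matrix K with entries K[n,m] = W·sinc(W(n−m)), n,m ∈ {−N,…,N}, satisfies 0 < λ < 1. -/
open scoped BigOperators

noncomputable def dpssF {n : ℕ} (v : Fin n → ℝ) (t : ℝ) : ℝ :=
  (∑ i, v i * Real.cos ((i : ℕ) * t)) ^ 2 + (∑ i, v i * Real.sin ((i : ℕ) * t)) ^ 2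

lemma dpssF_pos {n : ℕ} (v : Fin n → ℝ) (hv : v ≠ 0) (a b : ℝ) (ha : 0 ≤ a) (hab : a < b)
    (hb : b ≤ Real.pi) : 0 < ∫ t in a..b, dpssF v t := by
  apply intervalIntegral.integral_pos hab
  · unfold dpssF
    fun_prop
  · intro x _
    unfold dpssF
    positivity
  by_contra! hc
  apply hv
  let p : Polynomial ℂ := ∑ i : Fin n, Polynomial.C (v i : ℂ) * Polynomial.X ^ (i : ℕ)
  have hp : p = 0 := by
    apply Polynomial.eq_zero_of_infinite_isRoot
    have hinj : Set.InjOn (fun t : ℝ => Complex.exp (t * Complex.I)) (Set.Icc a b) := by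
      intro x hx y hy hxy
      have h1 : Real.cos x = Real.cos y := by
        have := congrArg Complex.re hxy
        simpa [Complex.exp_ofReal_mul_I_re] using this
      exact Real.injOn_cos ⟨ha.trans hx.1, hx.2.trans hb⟩ ⟨ha.trans hy.1, hy.2.trans hb⟩ h1
    refine Set.Infinite.mono ?_ ((Set.Icc_infinite hab).image hinj)
    rintro _ ⟨t, ht, rfl⟩
    have h0 := hc t ht
    unfold dpssF at h0
    have hA : ∑ i, v i * Real.cos ((i : ℕ) * t) = 0 := by
      nlinarith [sq_nonneg (∑ i, v i * Real.cos ((i : ℕ) * t)),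
        sq_nonneg (∑ i, v i * Real.sin ((i : ℕ) * t))]
    have hB : ∑ i, v i * Real.sin ((i : ℕ) * t) = 0 := by
      nlinarith [sq_nonneg (∑ i, v i * Real.cos ((i : ℕ) * t)),
        sq_nonneg (∑ i, v i * Real.sin ((i : ℕ) * t))]
    have he : ∀ i : Fin n, Complex.exp (t * Complex.I) ^ (i : ℕ)
        = Complex.exp (((i : ℕ) * t : ℝ) * Complex.I) := by
      intro i
      rw [← Complex.exp_nat_mul]
      push_cast
      ring_nf
    change Polynomial.eval (Complex.exp (t * Complex.I)) p = 0
    simp only [p, Polynomial.eval_finsetSum, Polynomial.eval_mul, Polynomial.eval_C,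
      Polynomial.eval_pow, Polynomial.eval_X, he]
    apply Complex.ext
    · simp only [Complex.re_sum, Complex.re_ofReal_mul, Complex.exp_ofReal_mul_I_re, hA,
        Complex.zero_re]
    · simp only [Complex.im_sum, Complex.im_ofReal_mul, Complex.exp_ofReal_mul_I_im, hB,
        Complex.zero_im]
  funext i
  have h := congrArg (fun q => Polynomial.coeff q (i : ℕ)) hp
  simp only [p, Polynomial.finsetSum_coeff, Polynomial.coeff_C_mul, Polynomial.coeff_X_pow,
    Polynomial.coeff_zero] at h
  rw [Finset.sum_eq_single i] at h
  · simpa using h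
  · intro j _ hj
    have : (i : ℕ) ≠ j := fun h => hj (Fin.ext h.symm)
    simp [this]
  · simp

lemma dpss_cos_int (W k : ℝ) : ∫ t in (0 : ℝ)..(Real.pi * W), Real.cos (k * t)
    = Real.pi * (W * sinc (W * k)) := by
  have hpi := Real.pi_ne_zero
  unfold sinc
  rcases eq_or_ne k 0 with rfl | hk
  · simp
  rcases eq_or_ne W 0 with rfl | hW
  · simp
  rw [if_neg (mul_ne_zero hW hk), intervalIntegral.integral_comp_mul_left _ hk, integral_cos]
  simp only [mul_zero, Real.sin_zero, sub_zero, smul_eq_mul]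
  rw [show k * (Real.pi * W) = Real.pi * (W * k) by ring]
  field_simp

lemma dpssF_int {n : ℕ} (v : Fin n → ℝ) (W : ℝ) :
    ∫ t in (0 : ℝ)..(Real.pi * W), dpssF v t =
      Real.pi * ∑ i, ∑ j, v i * v j * (W * sinc (W * (((i : ℕ) : ℝ) - ((j : ℕ) : ℝ)))) := by
  have h : dpssF v = fun t => ∑ i, ∑ j, v i * v j * 
      Real.cos ((((i : ℕ) : ℝ) - ((j : ℕ) : ℝ)) * t) := by
    funext t
    unfold dpssF
    rw [sq, sq, Finset.sum_mul_sum, Finset.sum_mul_sum, ← Finset.sum_add_distrib]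
    refine Finset.sum_congr rfl fun i _ => ?_
    rw [← Finset.sum_add_distrib]
    refine Finset.sum_congr rfl fun j _ => ?_
    rw [sub_mul, Real.cos_sub]
    ring
  rw [h, intervalIntegral.integral_finsetSum
    (fun i _ => Continuous.intervalIntegrable (by fun_prop) _ _), Finset.mul_sum]
  refine Finset.sum_congr rfl fun i _ => ?_
  rw [intervalIntegral.integral_finsetSum
    (fun i _ => Continuous.intervalIntegrable (by fun_prop) _ _), Finset.mul_sum]
  refine Finset.sum_congr rfl fun j _ => ?_
  rw [intervalIntegral.integral_const_mul, dpss_cos_int]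
  ring

lemma dpss_sinc_one {n : ℕ} (i j : Fin n) :
    sinc (1 * (((i : ℕ) : ℝ) - ((j : ℕ) : ℝ))) = if i = j then 1 else 0 := by
  unfold sinc
  rw [one_mul]
  rcases eq_or_ne i j with rfl | h
  · simp
  · have h1 : ((i : ℕ) : ℝ) - ((j : ℕ) : ℝ) ≠ 0 := by
      rw [sub_ne_zero]
      exact fun h2 => h (Fin.ext (by exact_mod_cast h2))
    rw [if_neg h1, if_neg h]
    have : Real.sin (Real.pi * (((i : ℕ) : ℝ) - ((j : ℕ) : ℝ))) = 0 := by
      have := Real.sin_int_mul_pi ((i : ℕ) - (j : ℕ) : ℤ)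
      push_cast at this
      rw [mul_comm]
      exact this
    rw [this, zero_div]

theorem dpss_eigenvalue_mem_Ioo
    (N : ℕ) (W : ℝ) (hW : W ∈ Set.Ioo (0 : ℝ) 1)
    (K : Matrix (Fin (2*N+1)) (Fin (2*N+1)) ℝ)
    (hK : ∀ i j : Fin (2*N+1),
      K i j = W * sinc (W * ((((i : ℕ) : ℝ) - (N : ℝ)) - (((j : ℕ) : ℝ) - (N : ℝ)))))
    (lam : ℝ)
    (hlam : ∃ v : Fin (2*N+1) → ℝ, v ≠ 0 ∧ K.mulVec v = lam • v) :
    0 < lam ∧ lam < 1 := by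
  obtain ⟨v, hv, hKv⟩ := hlam
  have hpi := Real.pi_pos
  have hpW : Real.pi * W < Real.pi := by nlinarith [hW.2]
  have hpW0 : 0 < Real.pi * W := mul_pos hpi hW.1
  have p1 := dpssF_pos v hv 0 (Real.pi * W) le_rfl hpW0 hpW.le
  have p2 := dpssF_pos v hv (Real.pi * W) Real.pi hpW0.le hpW le_rfl
  have hc : Continuous (dpssF v) := by unfold dpssF; fun_prop
  have hadd := intervalIntegral.integral_add_adjacent_intervals
    (hc.intervalIntegrable (μ := MeasureTheory.volume) 0 (Real.pi * W))
    (hc.intervalIntegrable (Real.pi * W) Real.pi)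
  have e1 : ∫ t in (0 : ℝ)..Real.pi, dpssF v t = Real.pi * ∑ i, v i ^ 2 := by
    have := dpssF_int v 1
    rw [mul_one] at this
    rw [this]
    congr 1
    refine Finset.sum_congr rfl fun i _ => ?_
    simp only [dpss_sinc_one]
    simp [sq]
  have e2 : ∫ t in (0 : ℝ)..(Real.pi * W), dpssF v t = Real.pi * (lam * ∑ i, v i ^ 2) := by
    rw [dpssF_int]
    congr 1
    rw [Finset.mul_sum]
    refine Finset.sum_congr rfl fun i _ => ?_
    have h := congrFun hKv i
    simp only [Matrix.mulVec, dotProduct, Pi.smul_apply, smul_eq_mul, hK,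
      sub_sub_sub_cancel_right] at h
    rw [show lam * v i ^ 2 = v i * (lam * v i) by ring, ← h, Finset.mul_sum]
    refine Finset.sum_congr rfl fun j _ => ?_
    ring
  have hS : 0 ≤ ∑ i, v i ^ 2 := Finset.sum_nonneg fun i _ => sq_nonneg _
  rw [e1, e2] at hadd
  rw [e2] at p1
  have q1 : 0 < lam * ∑ i, v i ^ 2 := pos_of_mul_pos_right p1 hpi.le
  have q2 : 0 < (1 - lam) * ∑ i, v i ^ 2 := by
    refine pos_of_mul_pos_right (a := Real.pi) ?_ hpi.le
    linarith
  exact ⟨pos_of_mul_pos_left q1 hS, by linarith [pos_of_mul_pos_left q2 hS]⟩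
end

section
/- For every W ∈ (0,1) and all q, q′ ∈ ℤ, the band-limited sampling orthogonality identity holds: Σ_{n∈ℤ} sinc(W(n − q))·sinc(W(n − q′)) = (1/W)·sinc(W(q − q′)). -/
open scoped BigOperators

open MeasureTheory AddCircle Set in
/-- indicator of the band on the circle -/
noncomputable def bandChi (W : ℝ) : AddCircle (1:ℝ) → ℂ :=
  AddCircle.liftIoc 1 (-1/2) (Set.indicator (Set.Ioc (-W/2) (W/2)) (fun _ => (1:ℂ)))

lemma bandChi_real (W : ℝ) (t : AddCircle (1:ℝ)) :
    (starRingEnd ℂ) (bandChi W t) = bandChi W t ∧ bandChi W t * bandChi W t = bandChi W t := by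
  unfold bandChi AddCircle.liftIoc
  simp only [Function.comp, Set.domRestrict_apply, Set.indicator]
  split_ifs <;> simp

open MeasureTheory AddCircle Set in
lemma bandChi_memLp (W : ℝ) : MemLp (bandChi W) ⊤ (haarAddCircle (T := 1)) := by
  apply MemLp.haarAddCircle
  unfold bandChi
  apply MemLp.memLp_liftIoc
  exact (memLp_top_const (1:ℂ)).indicator measurableSet_Ioc

open MeasureTheory AddCircle Set in
lemma bandF_memLp (W : ℝ) (q : ℤ) :
    MemLp (fun t => fourier q t * bandChi W t) 2 (haarAddCircle (T := 1)) := by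
  have h1 : MemLp (fun t => (fourier q t : ℂ)) ⊤ (haarAddCircle (T := 1)) := by
    refine MemLp.of_bound (fourier q).continuous.aestronglyMeasurable 1 (Filter.Eventually.of_forall fun t => ?_)
    rw [fourier_apply, Circle.norm_coe]
  have h2 : MemLp (fun t => fourier q t * bandChi W t) ⊤ (haarAddCircle (T := 1)) :=
    (bandChi_memLp W).mul h1
  exact h2.mono_exponent le_top

lemma sinc_int (W : ℝ) (m : ℤ) :
    ∫ x in (-W/2)..(W/2), Complex.exp (2 * Real.pi * Complex.I * m * x) = ((W * sinc (W * m) : ℝ) : ℂ) := by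
  by_cases hW : W = 0
  · simp [hW]
  by_cases hm : m = 0
  · simp only [hm, sinc]; simp
    ring
  · have hm' : (m : ℂ) ≠ 0 := by exact_mod_cast hm
    have hm2 : (m : ℝ) ≠ 0 := by exact_mod_cast hm
    have hpi : (Real.pi : ℂ) ≠ 0 := by exact_mod_cast Real.pi_ne_zero
    have hW' : (W : ℂ) ≠ 0 := by exact_mod_cast hW
    rw [integral_exp_mul_complex (by simp [hm', hpi])]
    have : W * (m:ℝ) ≠ 0 := mul_ne_zero hW hm2
    simp only [sinc, if_neg this]
    push_cast
    rw [Complex.sin]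
    have e1 : 2 * (Real.pi:ℂ) * Complex.I * m * (W / 2) = (Real.pi * (W * m)) * Complex.I := by ring
    have e2 : 2 * (Real.pi:ℂ) * Complex.I * m * (-W / 2) = -(Real.pi * (W * m)) * Complex.I := by ring
    rw [e1, e2]
    field_simp
    linear_combination (Complex.exp (Real.pi * W * m * Complex.I) - Complex.exp (-(Real.pi * W * m * Complex.I))) * Complex.I_sq

open MeasureTheory AddCircle Set in
lemma band_coeff (W : ℝ) (hW : W ∈ Set.Ioo (0 : ℝ) 1) (m : ℤ) :
    ∫ t, fourier m t * bandChi W t ∂(haarAddCircle (T := 1)) = ((W * sinc (W * m) : ℝ) : ℂ) := by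
  obtain ⟨h0, h1⟩ := hW
  rw [integral_haarAddCircle, ← AddCircle.intervalIntegral_preimage 1 (-1/2), ← sinc_int]
  rw [intervalIntegral.integral_of_le (by norm_num), intervalIntegral.integral_of_le (by linarith)]
  have hs : Ioc (-W/2) (W/2) ⊆ Ioc (-1/2 : ℝ) (-1/2+1) := by
    apply Ioc_subset_Ioc <;> linarith
  have : ∀ x ∈ Ioc (-1/2 : ℝ) (-1/2+1), fourier m (x : AddCircle (1:ℝ)) * bandChi W x
      = (Ioc (-W/2) (W/2)).indicator (fun x : ℝ => Complex.exp (2 * Real.pi * Complex.I * m * x)) x := by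
    intro x hx
    rw [bandChi, liftIoc_coe_apply hx, fourier_coe_apply]
    by_cases h : x ∈ Ioc (-W/2) (W/2) <;> simp [h]
  rw [setIntegral_congr_fun measurableSet_Ioc this, setIntegral_indicator measurableSet_Ioc,
    inter_eq_self_of_subset_right hs]
  simp

open MeasureTheory AddCircle Set in
lemma band_sum (W : ℝ) (hW : W ∈ Set.Ioo (0 : ℝ) 1) (q q' : ℤ) :
    HasSum (fun n : ℤ => ((W * sinc (W * (n - q : ℤ)) : ℝ) : ℂ) * ((W * sinc (W * (q' - n : ℤ)) : ℝ) : ℂ))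
      ((W * sinc (W * (q' - q : ℤ)) : ℝ) : ℂ) := by
  have hb := (fourierBasis (T := 1)).hasSum_inner_mul_inner
    (bandF_memLp W q).toLp (bandF_memLp W q').toLp
  refine Eq.mpr (congrArg₂ (fun (a : ℤ → ℂ) (b : ℂ) => HasSum a b) ?_ ?_) hb
  · ext n
    simp only [coe_fourierBasis]
    congr 1
    · rw [← band_coeff W hW, L2.inner_def]
      apply integral_congr_ae
      filter_upwards [(bandF_memLp W q).coeFn_toLp, coeFn_fourierLp 2 n] with t h1 h2
      rw [h1, h2, RCLike.inner_apply', map_mul, (bandChi_real W t).1, ← fourier_neg,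
        sub_eq_add_neg, fourier_add]
      ring
    · rw [← band_coeff W hW, L2.inner_def]
      apply integral_congr_ae
      filter_upwards [(bandF_memLp W q').coeFn_toLp, coeFn_fourierLp 2 n] with t h1 h2
      rw [h1, h2, RCLike.inner_apply', ← fourier_neg, sub_eq_add_neg, fourier_add]
      ring
  · rw [← band_coeff W hW, L2.inner_def]
    apply integral_congr_ae
    filter_upwards [(bandF_memLp W q).coeFn_toLp, (bandF_memLp W q').coeFn_toLp] with t h1 h2
    rw [h1, h2, RCLike.inner_apply', map_mul, (bandChi_real W t).1, ← fourier_neg,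
        sub_eq_add_neg, fourier_add]
    linear_combination (-(fourier q' t * fourier (-q) t)) * (bandChi_real W t).2

lemma sinc_neg' (x : ℝ) : sinc (-x) = sinc x := by
  simp [sinc]

/-- band-limited sampling orthogonality identity. -/
theorem sinc_sampling_orthogonality
    (W : ℝ) (hW : W ∈ Set.Ioo (0 : ℝ) 1) (q q' : ℤ) :
    ∑' n : ℤ, sinc (W * ((n : ℝ) - (q : ℝ))) * sinc (W * ((n : ℝ) - (q' : ℝ)))
      = (1 / W) * sinc (W * ((q : ℝ) - (q' : ℝ))) := by
  have h := band_sum W hW q q'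
  have hne : W ≠ 0 := hW.1.ne'
  simp only [← Complex.ofReal_mul] at h
  have h2 := (Complex.hasSum_ofReal.mp h).mul_left (1 / W ^ 2)
  have flip : ∀ a b : ℝ, sinc (W * (a - b)) = sinc (W * (b - a)) := by
    intro a b
    rw [← sinc_neg']; congr 1; ring
  have h3 := h2.tsum_eq
  push_cast at h3
  rw [flip q q']
  convert h3 using 1
  · congr 1; ext n
    rw [flip q' n]
    field_simp
  · field_simp
end

section
/- Let L, N′, K, g be positive integers with g ≤ N′. Let H ∈ ℂ^{LN′ × LN′} be a banded lower-triangular matrix, i.e., H[i,j] = 0 unless 0 ≤ i − j ≤ g (a causal channel with maximum delay spread g). Let P ∈ ℂ^{N′ × K} have its first g rows equal to zero (a zero prefix of length g). Then the equivalent channel matrix H_eq := (I_L ⊗ P)^H · H · (I_L ⊗ P) ∈ ℂ^{LK × LK} is block diagonal with K×K blocks: for all block indices l ≠ j in {0,…,L−1}, the sub-block P^H · H_{l,j} · P = 0, where H_{l,j} ∈ ℂ^{N′×N′} is defined by (H_{l,j})[m,m′] = H[lN′ + m, jN′ + m′]. -/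
open scoped BigOperators
open Matrix

/-- with a zero prefix of length `g` and a causal channel of maximum delay
spread `g`, the equivalent channel matrix `(I_L ⊗ P)ᴴ H (I_L ⊗ P)` is block diagonal:
every off-diagonal sub-block `Pᴴ H_{l,j} P` vanishes. We index the `LN′ × LN′` matrix `H`
by pairs `(l, m) ∈ Fin L × Fin N′` corresponding to the global index `i = l·N′ + m`. -/
theorem zero_prefix_block_diagonal
    (L N' K g : ℕ) (hL : 0 < L) (hN' : 0 < N') (hK : 0 < K) (hg : 0 < g) (hgN : g ≤ N')
    (H : Matrix (Fin L × Fin N') (Fin L × Fin N') ℂ)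
    (hH : ∀ a b : Fin L × Fin N',
      ¬(0 ≤ (((a.1 : ℕ) : ℤ) * (N' : ℤ) + ((a.2 : ℕ) : ℤ))
            - (((b.1 : ℕ) : ℤ) * (N' : ℤ) + ((b.2 : ℕ) : ℤ)) ∧
        (((a.1 : ℕ) : ℤ) * (N' : ℤ) + ((a.2 : ℕ) : ℤ))
            - (((b.1 : ℕ) : ℤ) * (N' : ℤ) + ((b.2 : ℕ) : ℤ)) ≤ (g : ℤ)) → H a b = 0)
    (P : Matrix (Fin N') (Fin K) ℂ)
    (hP : ∀ m : Fin N', (m : ℕ) < g → ∀ k : Fin K, P m k = 0) :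
    ∀ l j : Fin L, l ≠ j →
      Pᴴ * Matrix.of (fun m m' : Fin N' => H (l, m) (j, m')) * P = 0 := by
  intro l j hlj
  ext a b
  simp only [Matrix.mul_apply, Matrix.conjTranspose_apply, Matrix.of_apply, Matrix.zero_apply]
  refine Finset.sum_eq_zero fun m' _ => ?_
  rw [Finset.sum_mul]
  refine Finset.sum_eq_zero fun m _ => ?_
  by_cases hm : (m : ℕ) < g
  · simp [hP m hm]
  have h0 : H (l, m) (j, m') = 0 := by
    apply hH
    rintro ⟨h1, h2⟩
    dsimp only at h1 h2
    have hm1 := m.isLt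
    have hm2 := m'.isLt
    rcases lt_or_gt_of_ne hlj with h | h
    · have h3 : ((l : ℕ) : ℤ) + 1 ≤ ((j : ℕ) : ℤ) := by exact_mod_cast h
      have h4 := mul_le_mul_of_nonneg_right h3 (Int.natCast_nonneg N')
      rw [add_mul, one_mul] at h4
      omega
    · have h3 : ((j : ℕ) : ℤ) + 1 ≤ ((l : ℕ) : ℤ) := by exact_mod_cast h
      have h4 := mul_le_mul_of_nonneg_right h3 (Int.natCast_nonneg N')
      rw [add_mul, one_mul] at h4
      omega
  simp [h0]
end
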